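/- Let g be a prefix replacement permutation of the Cantor set C = ℕ → Bool. Then the set of cardinalities of the finite orbits of the cyclic group ⟨g⟩ acting on C is a finite set of positive integers; in particular, the lengths of the finite orbits of g on C are bounded. -/

import Mathlib

/-!
Near each point `ξ` the permutation `g` replaces a prefix of length at most `L`, changing its
length by an integer `d ξ`. Along a finite orbit of length `k` the total change `D` is, after
replacing `g` by `g⁻¹` if necessary, nonnegative, and then the orbit contains a point `ξ` (where
the partial sums of `d` attain their minimum) all of whose forward partial sums are nonnegative.
Let `u` be the prefix of `ξ` of length `L`. The images of the cone of `u` under the iterates of `g`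
then always have a prefix of length at least `L`, so each iterate acts on this cone as a single
prefix replacement (`iterate_prepend_pref`); in particular `g ^ k` sends `u⌢η` to `u'⌢η`, where
`u'` is the prefix of `ξ` of length `L + D`.

If `D = 0` then `g ^ k` is the identity on the cone of `u`, and if `D > 0` it contracts the cone
to `ξ`; in both cases every periodic point of `g` in the cone of `u` is fixed by `g ^ k`
(`iterate_eq_of_isPeriodicPt`). Hence two such starting points with the same prefix of length `L`
have periods dividing each other, so there are at most `2 ^ L` periods with `D ≥ 0`
(`finite_goodPeriods`), and likewise for `g⁻¹`.
-/

/-- The Cantor set `C = ℕ → Bool`. -/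
abbrev Cantor : Type := ℕ → Bool

/-- Prepend a finite word `a` to an element `ξ` of the Cantor set. -/
def prepend (a : List Bool) (ξ : Cantor) : Cantor :=
  fun n => if h : n < a.length then a.get ⟨n, h⟩ else ξ (n - a.length)

/-- A finite set of finite binary words is a complete antichain if distinct elements
are incomparable in the prefix order and every `ξ : ℕ → Bool` has an initial segment
lying in it. -/
def IsCompleteAntichain (A : Set (List Bool)) : Prop :=
  A.Finite ∧
  (∀ a ∈ A, ∀ b ∈ A, a ≠ b → ¬ a <+: b) ∧
  (∀ ξ : Cantor, ∃ n : ℕ, (List.ofFn fun i : Fin n => ξ i) ∈ A)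

/-- A permutation of the Cantor set is a prefix replacement map if it is given by
a bijection between two finite complete antichains of prefixes. -/
def IsPrefixReplacement (g : Equiv.Perm Cantor) : Prop :=
  ∃ A B : Set (List Bool), IsCompleteAntichain A ∧ IsCompleteAntichain B ∧
    ∃ σ : A ≃ B, ∀ (a : A) (ξ : Cantor), g (prepend a ξ) = prepend (σ a : List Bool) ξ

/-- The initial segment of `ξ` of length `m`. -/
def pref (ξ : Cantor) (m : ℕ) : List Bool := List.ofFn fun i : Fin m => ξ i

lemma length_pref (ξ : Cantor) (m : ℕ) : (pref ξ m).length = m := by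
  simp [pref]

lemma prepend_of_lt (a : List Bool) (η : Cantor) {n : ℕ} (h : n < a.length) :
    prepend a η n = a[n] := by
  simp [prepend, h]

lemma prepend_add (a : List Bool) (η : Cantor) (n : ℕ) :
    prepend a η (a.length + n) = η n := by
  simp [prepend]

lemma prepend_append (a b : List Bool) (η : Cantor) :
    prepend (a ++ b) η = prepend a (prepend b η) := by
  funext n
  rcases lt_or_ge n a.length with h | h
  · rw [prepend_of_lt _ _ h, prepend_of_lt _ _ (by simp; omega), List.getElem_append_left h]
  · obtain ⟨m, rfl⟩ := Nat.exists_eq_add_of_le h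
    rw [prepend_add]
    rcases lt_or_ge m b.length with h' | h'
    · rw [prepend_of_lt _ _ h', prepend_of_lt _ _ (by simp; omega),
        List.getElem_append_right (by omega)]
      simp
    · obtain ⟨l, rfl⟩ := Nat.exists_eq_add_of_le h'
      rw [prepend_add, ← add_assoc, ← List.length_append, prepend_add]

lemma pref_prepend (b : List Bool) (t : Cantor) (m : ℕ) :
    pref (prepend b t) (b.length + m) = b ++ pref t m := by
  apply List.ext_getElem
  · simp [pref]
  · intro i h₁ h₂
    rcases lt_or_ge i b.length with h | h
    · rw [List.getElem_append_left h]
      simp [pref, prepend_of_lt _ _ h]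
    · obtain ⟨l, rfl⟩ := Nat.exists_eq_add_of_le h
      rw [List.getElem_append_right (by omega)]
      simp [pref, prepend_add]

lemma prepend_pref_of_lt (ξ η : Cantor) {m i : ℕ} (h : i < m) :
    prepend (pref ξ m) η i = ξ i := by
  rw [prepend_of_lt _ _ (by rwa [length_pref])]
  simp [pref]

lemma prepend_pref_add (ξ η : Cantor) (m i : ℕ) :
    prepend (pref ξ m) η (m + i) = η i := by
  have := prepend_add (pref ξ m) η i
  rwa [length_pref] at this

lemma prepend_pref_tail (ξ : Cantor) (m : ℕ) :
    prepend (pref ξ m) (fun i => ξ (m + i)) = ξ := by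
  funext n
  rcases lt_or_ge n m with h | h
  · exact prepend_pref_of_lt _ _ h
  · obtain ⟨l, rfl⟩ := Nat.exists_eq_add_of_le h
    exact prepend_pref_add _ _ _ _

/-- Around every point, `g` replaces a prefix of length at most `L` by another one of length at
most `L`, and `d` records the change of length. -/
def IsLengthCocycle (g : Equiv.Perm Cantor) (L : ℕ) (d : Cantor → ℤ) : Prop :=
  ∀ ξ, ∃ (a b : List Bool) (t : Cantor), a.length ≤ L ∧ b.length ≤ L ∧ ξ = prepend a t ∧
    (∀ η, g (prepend a η) = prepend b η) ∧ d ξ = (b.length : ℤ) - a.length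

lemma exists_isLengthCocycle {g : Equiv.Perm Cantor} (hg : IsPrefixReplacement g) :
    ∃ L d, IsLengthCocycle g L d := by
  obtain ⟨A, B, hA, hB, σ, hσ⟩ := hg
  obtain ⟨M, hM⟩ := (hA.1.image List.length).bddAbove
  obtain ⟨N, hN⟩ := (hB.1.image List.length).bddAbove
  choose n hn using hA.2.2
  refine ⟨max M N, fun ξ => ((σ ⟨_, hn ξ⟩ : List Bool).length : ℤ) - (pref ξ (n ξ)).length,
    fun ξ => ⟨pref ξ (n ξ), σ ⟨_, hn ξ⟩, fun i => ξ (n ξ + i), ?_, ?_, ?_, ?_, rfl⟩⟩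
  · exact (hM ⟨_, hn ξ, rfl⟩).trans (le_max_left _ _)
  · exact (hN ⟨_, (σ ⟨_, hn ξ⟩).2, rfl⟩).trans (le_max_right _ _)
  · exact (prepend_pref_tail ξ _).symm
  · exact fun η => hσ ⟨_, hn ξ⟩ η

lemma IsLengthCocycle.inv {g : Equiv.Perm Cantor} {L : ℕ} {d : Cantor → ℤ}
    (h : IsLengthCocycle g L d) : IsLengthCocycle g⁻¹ L (fun ξ => -d (g⁻¹ ξ)) := by
  intro ξ
  obtain ⟨a, b, t, ha, hb, hξ, hab, hd⟩ := h (g⁻¹ ξ)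
  refine ⟨b, a, t, hb, ha, ?_, fun η => ?_, ?_⟩
  · rw [← hab, ← hξ]
    exact (g.apply_symm_apply ξ).symm
  · rw [← hab]
    exact g.symm_apply_apply _
  · simp only [hd]; ring

lemma IsLengthCocycle.apply_prepend_pref {g : Equiv.Perm Cantor} {L : ℕ} {d : Cantor → ℤ}
    (h : IsLengthCocycle g L d) (ξ : Cantor) {m m' : ℕ} (hm : L ≤ m) (hm' : (m' : ℤ) = m + d ξ)
    (η : Cantor) : g (prepend (pref ξ m) η) = prepend (pref (g ξ) m') η := by
  obtain ⟨a, b, t, ha, hb, hξ, hab, hd⟩ := h ξ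
  obtain ⟨l, rfl⟩ := Nat.exists_eq_add_of_le (ha.trans hm)
  obtain rfl : m' = b.length + l := by push_cast at hm'; omega
  rw [hξ, pref_prepend, prepend_append, hab, hab, pref_prepend, prepend_append]

/-- As long as the partial sums of `d` stay nonnegative, no letter of the tail `η` is consumed. -/
lemma IsLengthCocycle.iterate_prepend_pref {g : Equiv.Perm Cantor} {L : ℕ} {d : Cantor → ℤ}
    (h : IsLengthCocycle g L d) {ξ : Cantor} (hξ : ∀ n, 0 ≤ birkhoffSum g d n ξ) (n : ℕ)
    (η : Cantor) :
    g^[n] (prepend (pref ξ L) η) =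
      prepend (pref (g^[n] ξ) (L + (birkhoffSum g d n ξ).toNat)) η := by
  induction n with
  | zero => simp
  | succ n ih =>
    rw [Function.iterate_succ_apply', Function.iterate_succ_apply', ih]
    apply h.apply_prepend_pref _ (by omega)
    have h₁ := hξ n
    have h₂ := hξ (n + 1)
    have h₃ := birkhoffSum_succ g d n ξ
    omega

/-- If `f` maps the cone of the length-`L` prefix of `ξ` by prefix replacement onto a smaller
(or equal) cone around the same point `ξ`, then it fixes all its periodic points in the cone. -/
lemma apply_eq_of_isPeriodicPt {f : Cantor → Cantor} {L D : ℕ} {ξ ζ : Cantor}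
    (hf : ∀ η, f (prepend (pref ξ L) η) = prepend (pref ξ (L + D)) η) (hξ : f ξ = ξ)
    (hζ : ∀ i < L, ζ i = ξ i) {N : ℕ} (hN : 0 < N) (hp : Function.IsPeriodicPt f N ζ) :
    f ζ = ζ := by
  -- A point agreeing with `ξ` on `L` letters lies in the cone.
  have cone : ∀ ζ : Cantor, (∀ i < L, ζ i = ξ i) →
      ζ = prepend (pref ξ L) (fun i => ζ (L + i)) := by
    intro ζ hζ
    have : pref ξ L = pref ζ L := by
      unfold pref
      congr 1
      funext i
      exact (hζ i i.2).symm
    rw [this, prepend_pref_tail]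
  rcases Nat.eq_zero_or_pos D with rfl | hD
  · conv_lhs => rw [cone ζ hζ]
    rw [hf]
    exact (cone ζ hζ).symm
  · -- Each application of `f` gains `D` letters of agreement with the fixed point `ξ`.
    have step : ∀ (m : ℕ) (ζ : Cantor), (∀ i < L + m, ζ i = ξ i) →
        ∀ i < L + m + D, f ζ i = ξ i := by
      intro m ζ hζ i hi
      have hz := hf (fun i => ζ (L + i))
      rw [← cone ζ fun i hi => hζ i (by omega)] at hz
      have hx := hf (fun i => ξ (L + i))
      rw [← cone ξ fun _ _ => rfl, hξ] at hx
      rw [hz]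
      rcases lt_or_ge i (L + D) with h | h
      · exact prepend_pref_of_lt _ _ h
      · obtain ⟨l, rfl⟩ := Nat.exists_eq_add_of_le h
        rw [hx, prepend_pref_add, prepend_pref_add]
        exact hζ _ (by omega)
    have iter : ∀ j : ℕ, ∀ i < L + j * D, f^[j] ζ i = ξ i := by
      intro j
      induction j with
      | zero => simpa using hζ
      | succ j ih =>
        intro i hi
        rw [Function.iterate_succ_apply']
        exact step _ _ ih i (by rw [Nat.succ_mul] at hi; omega)
    have : ζ = ξ := by
      funext i
      have h₁ := iter (N * (i + 1)) i (by nlinarith [Nat.mul_pos hN hD])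
      rwa [(hp.mul_const (i + 1)).eq] at h₁
    rw [this, hξ]

/-- The periods of the periodic points of `g` all of whose partial sums of `d` are nonnegative. -/
def goodPeriods (g : Equiv.Perm Cantor) (d : Cantor → ℤ) : Set ℕ :=
  {k | 0 < k ∧ ∃ ξ, Function.minimalPeriod g ξ = k ∧ ∀ n, 0 ≤ birkhoffSum g d n ξ}

lemma IsLengthCocycle.iterate_eq_of_isPeriodicPt {g : Equiv.Perm Cantor} {L : ℕ} {d : Cantor → ℤ}
    (h : IsLengthCocycle g L d) {ξ ζ : Cantor} (hξ : ∀ n, 0 ≤ birkhoffSum g d n ξ) {k l : ℕ}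
    (hk : Function.IsPeriodicPt g k ξ) (hl : 0 < l) (hζ : Function.IsPeriodicPt g l ζ)
    (hc : ∀ i < L, ζ i = ξ i) : Function.IsPeriodicPt g k ζ := by
  refine apply_eq_of_isPeriodicPt (f := g^[k]) (D := (birkhoffSum g d k ξ).toNat)
    (fun η => ?_) hk hc hl (hζ.iterate k)
  rw [h.iterate_prepend_pref hξ, hk.eq]

lemma IsLengthCocycle.finite_goodPeriods {g : Equiv.Perm Cantor} {L : ℕ} {d : Cantor → ℤ}
    (h : IsLengthCocycle g L d) : (goodPeriods g d).Finite := by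
  have hex : ∀ k : ℕ, ∃ ξ : Cantor, k ∈ goodPeriods g d →
      Function.minimalPeriod g ξ = k ∧ ∀ n, 0 ≤ birkhoffSum g d n ξ := by
    intro k
    by_cases hk : k ∈ goodPeriods g d
    · obtain ⟨ξ, hξ⟩ := hk.2
      exact ⟨ξ, fun _ => hξ⟩
    · exact ⟨fun _ => false, fun h => absurd h hk⟩
  choose x hx using hex
  have dvd : ∀ k ∈ goodPeriods g d, ∀ l ∈ goodPeriods g d, (∀ i < L, x l i = x k i) → l ∣ k := by
    intro k hk l hl hc
    obtain ⟨hk₁, hk₂⟩ := hx k hk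
    obtain ⟨hl₁, -⟩ := hx l hl
    have pk := Function.isPeriodicPt_minimalPeriod g (x k)
    have pl := Function.isPeriodicPt_minimalPeriod g (x l)
    rw [hk₁] at pk
    rw [hl₁] at pl
    have hdvd := (h.iterate_eq_of_isPeriodicPt hk₂ pk hl.1 pl hc).minimalPeriod_dvd
    rwa [hl₁] at hdvd
  refine Set.Finite.of_finite_image (f := fun k => fun i : Fin L => x k i) (Set.toFinite _) ?_
  intro k hk l hl hkl
  have hc : ∀ i < L, x k i = x l i := fun i hi => congrFun hkl ⟨i, hi⟩
  exact Nat.dvd_antisymm (dvd l hl k hk hc) (dvd k hk l hl fun i hi => (hc i hi).symm)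

/-- A periodic orbit with nonnegative total length change contains a point with nonnegative
partial sums. -/
lemma minimalPeriod_mem_goodPeriods {g : Equiv.Perm Cantor} {d : Cantor → ℤ} {ξ : Cantor}
    (hk : 0 < Function.minimalPeriod g ξ)
    (hD : 0 ≤ birkhoffSum g d (Function.minimalPeriod g ξ) ξ) :
    Function.minimalPeriod g ξ ∈ goodPeriods g d := by
  have hper := Function.isPeriodicPt_minimalPeriod g ξ
  set k := Function.minimalPeriod g ξ with hkdef
  obtain ⟨i, -, hi⟩ := Finset.exists_min_image (Finset.range k)
    (fun n => birkhoffSum g d n ξ) ⟨0, by simpa using hk⟩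
  have hmin : ∀ n, birkhoffSum g d i ξ ≤ birkhoffSum g d n ξ := by
    intro n
    induction n using Nat.strong_induction_on with
    | _ n ih =>
      rcases lt_or_ge n k with h | h
      · exact hi n (by simpa using h)
      · obtain ⟨m, rfl⟩ := Nat.exists_eq_add_of_le h
        have := ih m (by omega)
        rw [birkhoffSum_add, hper.eq]
        omega
  refine ⟨hk, g^[i] ξ, ?_, fun n => ?_⟩
  · exact Function.minimalPeriod_apply_iterate (Function.minimalPeriod_pos_iff_mem_periodicPts.1 hk) i
  · have := hmin (i + n)
    rw [birkhoffSum_add] at this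
    omega

lemma minimalPeriod_inv (g : Equiv.Perm Cantor) (ξ : Cantor) :
    Function.minimalPeriod (g⁻¹ : Equiv.Perm Cantor) ξ = Function.minimalPeriod g ξ := by
  have key : ∀ (g : Equiv.Perm Cantor) (n : ℕ), Function.IsPeriodicPt g n ξ →
      Function.IsPeriodicPt (g⁻¹ : Equiv.Perm Cantor) n ξ := by
    intro g n hn
    have hl : Function.LeftInverse (g⁻¹ : Equiv.Perm Cantor) g := g.symm_apply_apply
    have := hl.iterate n ξ
    rwa [hn.eq] at this
  apply Nat.dvd_antisymm
  · exact (key g _ (Function.isPeriodicPt_minimalPeriod g ξ)).minimalPeriod_dvd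
  · have := key g⁻¹ _ (Function.isPeriodicPt_minimalPeriod _ ξ)
    rw [inv_inv] at this
    exact this.minimalPeriod_dvd

/-- Over a full period, the total length change of `g⁻¹` is the negative of that of `g`. -/
lemma birkhoffSum_inv {g : Equiv.Perm Cantor} (d : Cantor → ℤ) {ξ : Cantor} {k : ℕ}
    (hk : Function.IsPeriodicPt g k ξ) :
    birkhoffSum (g⁻¹ : Equiv.Perm Cantor) (fun ξ => -d (g⁻¹ ξ)) k ξ = -birkhoffSum g d k ξ := by
  unfold birkhoffSum
  rw [← Finset.sum_range_reflect, ← Finset.sum_neg_distrib]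
  refine Finset.sum_congr rfl fun i hi => ?_
  have hi : i < k := by simpa using hi
  have hl : Function.LeftInverse (g⁻¹ : Equiv.Perm Cantor) g := g.symm_apply_apply
  have h₁ := hl.iterate (k - 1 - i + 1) (g^[i] ξ)
  rw [← Function.iterate_add_apply, show k - 1 - i + 1 + i = k by omega, hk.eq,
    Function.iterate_succ_apply'] at h₁
  simp only [h₁]

lemma range_zpow_eq_orbit (g : Equiv.Perm Cantor) (ξ : Cantor) :
    (Set.range fun n : ℤ => (g ^ n) ξ) = MulAction.orbit (Subgroup.zpowers g) ξ := by
  ext η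
  constructor
  · rintro ⟨n, rfl⟩
    exact ⟨⟨g ^ n, n, rfl⟩, rfl⟩
  · rintro ⟨⟨_, n, rfl⟩, rfl⟩
    exact ⟨n, rfl⟩

/-- For a prefix replacement permutation `g` of the Cantor set, the set of
cardinalities of the finite orbits of `⟨g⟩` on the Cantor set is a finite set of
positive integers; in particular the lengths of the finite orbits are bounded. -/
theorem finite_orbit_lengths_finite (g : Equiv.Perm Cantor)
    (hg : IsPrefixReplacement g) :
    {k : ℕ | ∃ ξ : Cantor, (Set.range fun n : ℤ => (g ^ n) ξ).Finite ∧
      (Set.range fun n : ℤ => (g ^ n) ξ).ncard = k}.Finite ∧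
    ∀ k ∈ {k : ℕ | ∃ ξ : Cantor, (Set.range fun n : ℤ => (g ^ n) ξ).Finite ∧
      (Set.range fun n : ℤ => (g ^ n) ξ).ncard = k}, 0 < k := by
  have hpos : ∀ k ∈ {k : ℕ | ∃ ξ : Cantor, (Set.range fun n : ℤ => (g ^ n) ξ).Finite ∧
      (Set.range fun n : ℤ => (g ^ n) ξ).ncard = k}, 0 < k := by
    rintro k ⟨ξ, hfin, rfl⟩
    exact (Set.ncard_pos hfin).2 (Set.range_nonempty _)
  refine ⟨?_, hpos⟩
  obtain ⟨L, d, h⟩ := exists_isLengthCocycle hg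
  refine (h.finite_goodPeriods.union h.inv.finite_goodPeriods).subset ?_
  intro k hkmem
  have hk := hpos k hkmem
  obtain ⟨ξ, hfin, hcard⟩ := hkmem
  have hmp : Function.minimalPeriod g ξ = k := by
    rw [range_zpow_eq_orbit] at hfin hcard
    have := hfin.fintype
    rw [← hcard, ← Nat.card_coe_set_eq, Nat.card_eq_fintype_card]
    exact MulAction.minimalPeriod_eq_card (a := g) (b := ξ)
  subst hmp
  rcases le_total 0 (birkhoffSum g d (Function.minimalPeriod g ξ) ξ) with hD | hD
  · exact Or.inl (minimalPeriod_mem_goodPeriods hk hD)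
  · right
    rw [← minimalPeriod_inv] at hk ⊢
    apply minimalPeriod_mem_goodPeriods hk
    rw [minimalPeriod_inv, birkhoffSum_inv d (Function.isPeriodicPt_minimalPeriod g ξ)]
    omega
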